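/- arXiv:math/0511474 — 2 statements merged into one kernel-verified Lean document; each statement's English description precedes it below -/
import Mathlib

section
/- For every natural number n, the number of words of length at most n in N_fin(p) is at most the cardinality of the ball B(n) in the generalized Thompson group F(p): #{w ∈ N_fin(p) : |w| ≤ n} ≤ #B(n). -/
/-- Relators of the generalized Thompson group `F(p)`. -/
def ThompsonRels (p : ℕ) : Set (FreeGroup ℕ) :=
  {r | ∃ i j : ℕ, i < j ∧
    r = FreeGroup.of j * FreeGroup.of i * (FreeGroup.of (j + p - 1))⁻¹ * (FreeGroup.of i)⁻¹}

/-- The generalized Thompson group `F(p)` as a presented group. -/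
abbrev FP (p : ℕ) := PresentedGroup (ThompsonRels p)

/-- The generator `x_i` of `F(p)`. -/
def xgen (p : ℕ) (i : ℕ) : FP p := PresentedGroup.of i

/-- Word length of `g ∈ F(p)` with respect to `x_0, …, x_{p−1}`: the least `n`
such that `g` is a product of `n` elements of `{x_0^{±1}, …, x_{p−1}^{±1}}`. -/
noncomputable def wlen (p : ℕ) (g : FP p) : ℕ :=
  sInf {n | ∃ l : List (FP p), l.length = n ∧
    (∀ a ∈ l, ∃ i < p, a = xgen p i ∨ a = (xgen p i)⁻¹) ∧ l.prod = g}

/-- The forbidden subwords (1)–(5). -/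
def Forbidden (p : ℕ) (u : List (ℕ × Bool)) : Prop :=
  (∃ (i : ℕ) (ε : Bool), i ≤ p - 1 ∧ u = [(i, ε), (i, !ε)]) ∨
  (∃ (α β k : ℕ) (ε : Bool), 1 ≤ β ∧ β < α ∧ α ≤ p - 1 ∧
    u = (α, ε) :: (List.replicate k ((0 : ℕ), true) ++ [(β, true)])) ∨
  (∃ (α β k : ℕ) (ε : Bool), 1 ≤ β ∧ β < α ∧ α ≤ p - 1 ∧
    u = (α, ε) :: (List.replicate (k + 1) ((0 : ℕ), true) ++ [(β, false)])) ∨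
  (∃ (α β k : ℕ) (ε : Bool), 1 ≤ α ∧ α ≤ β ∧ β ≤ p - 1 ∧
    u = (α, ε) :: (List.replicate (k + 1) ((0 : ℕ), true) ++ [(β, true)])) ∨
  (∃ (α β k : ℕ) (ε : Bool), 1 ≤ α ∧ α ≤ β ∧ β ≤ p - 1 ∧
    u = (α, ε) :: (List.replicate (k + 2) ((0 : ℕ), true) ++ [(β, false)]))

/-- `N_fin(p)`: words over `x_0^{±1}, …, x_{p−1}^{±1}` with no forbidden
subword. -/
def NFin (p : ℕ) (w : List (ℕ × Bool)) : Prop :=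
  (∀ a ∈ w, a.1 ≤ p - 1) ∧ ∀ u, u <:+: w → ¬ Forbidden p u

/-- compatibility of consecutive letters -/
def Cmp (q : ℤ) (a b : ℤ × Bool) : Prop :=
  ¬ (b.1 = a.1 ∧ b.2 = !a.2) ∧ (b.2 = true → a.1 ≤ b.1) ∧ (b.2 = false → a.1 ≤ b.1 + q)

def HC (q : ℤ) (a : ℤ × Bool) : List (ℤ × Bool) → Prop
  | [] => True
  | b :: _ => Cmp q a b

def Red (q : ℤ) : List (ℤ × Bool) → Prop
  | [] => True
  | a :: v => HC q a v ∧ Red q v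

def ins (q : ℤ) : ℤ → Bool → List (ℤ × Bool) → List (ℤ × Bool)
  | j, e, [] => [(j, e)]
  | j, e, (i, d) :: v =>
    if i = j ∧ d = !e then v
    else if d = true ∧ i < j then (i, d) :: ins q (j + q) e v
    else if d = false ∧ i + q < j then (i, d) :: ins q (j - q) e v
    else (j, e) :: (i, d) :: v

theorem ins_of_HC (q j : ℤ) (e : Bool) (v : List (ℤ × Bool)) (h : HC q (j, e) v) :
    ins q j e v = (j, e) :: v := by
  cases v with
  | nil => rfl
  | cons b v =>
    obtain ⟨i, d⟩ := b
    simp only [HC, Cmp] at h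
    obtain ⟨h1, h2, h3⟩ := h
    rw [ins, if_neg h1, if_neg (by intro h; have := h2 h.1; omega),
      if_neg (by intro h; have := h3 h.1; omega)]

/-- head of an insertion -/
theorem ins_HC (q : ℤ) (hq : 0 < q) (a : ℤ × Bool) (j : ℤ) (e : Bool) (v : List (ℤ × Bool))
    (hv : Red q v) (ha : HC q a v) (h1 : a.1 < j) (h2 : a.2 = true → a.1 + q < j) :
    HC q a (ins q j e v) := by
  obtain ⟨i, d⟩ := a
  simp only at h1 h2
  have hj : Cmp q (i, d) (j, e) := by
    refine ⟨by simp; omega, by simp; omega, by simp; omega⟩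
  cases v with
  | nil => exact hj
  | cons b v =>
    obtain ⟨k, c⟩ := b
    rw [ins]
    split_ifs with g1 g2 g3
    · obtain ⟨rfl, rfl⟩ := g1
      cases v with
      | nil => trivial
      | cons b v =>
        obtain ⟨m, f⟩ := b
        simp only [Red, HC, Cmp] at *
        obtain ⟨⟨h3, h4, h5⟩, _⟩ := hv
        refine ⟨?_, ?_, ?_⟩
        · rintro ⟨rfl, rfl⟩
          cases d <;> simp_all <;> omega
        · intro h; have := h4 h; omega
        · intro h; have := h5 h; omega
    · exact ha
    · exact ha
    · exact hj

theorem ins_Red (q : ℤ) (hq : 0 < q) (v : List (ℤ × Bool)) : ∀ (j : ℤ) (e : Bool),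
    Red q v → Red q (ins q j e v) := by
  induction v with
  | nil => intro j e _; simp [ins, Red, HC]
  | cons b v ih =>
    obtain ⟨i, d⟩ := b
    intro j e h
    rw [ins]
    split_ifs with g1 g2 g3
    · exact h.2
    · exact ⟨ins_HC q hq _ _ _ _ h.2 h.1 (by simp; omega) (by simp; omega), ih _ _ h.2⟩
    · exact ⟨ins_HC q hq _ _ _ _ h.2 h.1 (by simp; omega) (by simp [g3.1]), ih _ _ h.2⟩
    · refine ⟨⟨g1, ?_, ?_⟩, h⟩
      · intro h; simp only at h; simp [h] at g2; simpa using g2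
      · intro h; simp only at h; simp [h] at g3; simpa using g3

theorem ins_inv (q : ℤ) (hq : 0 < q) (v : List (ℤ × Bool)) : ∀ (j : ℤ) (e : Bool),
    Red q v → ins q j (!e) (ins q j e v) = v := by
  induction v with
  | nil => intro j e _; simp [ins]
  | cons b v ih =>
    obtain ⟨i, d⟩ := b
    intro j e h
    rw [ins]
    split_ifs with g1 g2 g3
    · obtain ⟨rfl, rfl⟩ := g1
      exact ins_of_HC _ _ _ _ h.1
    · rw [ins, if_neg (by omega), if_pos g2, ih _ _ h.2]
    · rw [ins, if_neg (by omega), if_neg g2, if_pos g3, ih _ _ h.2]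
    · rw [ins, if_pos (by simp)]

theorem ins_rel (q : ℤ) (hq : 0 < q) (v : List (ℤ × Bool)) : ∀ (i j : ℤ), i < j →
    Red q v → ins q j true (ins q i true v) = ins q i true (ins q (j + q) true v) := by
  have key : ∀ (v : List (ℤ × Bool)) (i j : ℤ), i < j → Red q v → HC q (i, true) v →
      ins q j true (ins q i true v) = ins q i true (ins q (j + q) true v) := by
    intro v i j hij hv h
    rw [ins_of_HC q i true v h, ins_of_HC q i true _
      (ins_HC q hq (i, true) (j + q) true v hv h (by simp; omega) (by simp; omega)), ins,
      if_neg (by simp), if_pos (by simpa using hij)]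
  induction v with
  | nil => intro i j hij h; exact key _ i j hij h trivial
  | cons b v ih =>
    obtain ⟨k, d⟩ := b
    intro i j hij h
    by_cases hc : HC q (i, true) ((k, d) :: v)
    · exact key _ i j hij h hc
    cases d
    · by_cases hki : k = i
      · subst hki
        have e1 : ins q k true ((k, false) :: v) = v := by simp [ins]
        have e2 : ins q (j + q) true ((k, false) :: v) = (k, false) :: ins q j true v := by
          rw [ins, if_neg (by omega), if_neg (by simp), if_pos (by simpa using hij)]; simp
        rw [e1, e2]; simp [ins]
      · have hk : k + q < i := by
          by_contra hk
          exact hc ⟨by simp [hki], by simp, by simp; omega⟩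
        have e : ∀ (m : ℤ) (u : List (ℤ × Bool)), k + q < m →
            ins q m true ((k, false) :: u) = (k, false) :: ins q (m - q) true u := by
          intro m u hm
          rw [ins, if_neg (by omega), if_neg (by simp), if_pos (by simpa using hm)]
        rw [e i v hk, e _ _ (by omega), e _ _ (by omega), e _ _ hk, ih _ _ (by omega) h.2]
        congr 3; ring_nf
    · have hk : k < i := by
        by_contra hk
        exact hc ⟨by simp, by simp; omega, by simp⟩
      have e : ∀ (m : ℤ) (u : List (ℤ × Bool)), k < m →
          ins q m true ((k, true) :: u) = (k, true) :: ins q (m + q) true u := by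
        intro m u hm
        rw [ins, if_neg (by simp), if_pos (by simpa using hm)]
      rw [e i v hk, e _ _ (by omega), e _ _ (by omega), e _ _ hk, ih _ _ (by omega) h.2]

def sh (s : ℤ) (v : List (ℤ × Bool)) : List (ℤ × Bool) := v.map (fun a => (a.1 + s, a.2))

theorem sh_HC (q s : ℤ) (a : ℤ × Bool) (v : List (ℤ × Bool)) (h : HC q a v) :
    HC q (a.1 + s, a.2) (sh s v) := by
  cases v with
  | nil => trivial
  | cons b v =>
    simp only [sh, HC, Cmp, List.map_cons] at *
    obtain ⟨h1, h2, h3⟩ := h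
    refine ⟨fun h => h1 ⟨by omega, h.2⟩, fun h => ?_, fun h => ?_⟩
    · have := h2 h; omega
    · have := h3 h; omega

theorem sh_Red (q s : ℤ) (v : List (ℤ × Bool)) (h : Red q v) : Red q (sh s v) := by
  induction v with
  | nil => trivial
  | cons b v ih => exact ⟨sh_HC q s b v h.1, ih h.2⟩

theorem sh_sh (s t : ℤ) (h : s + t = 0) (v : List (ℤ × Bool)) : sh s (sh t v) = v := by
  have : ((fun a : ℤ × Bool => (a.1 + s, a.2)) ∘ fun a => (a.1 + t, a.2)) = id := by
    funext a; ext <;> simp; omega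
  simp [sh, this]

theorem ins_sh (q s : ℤ) (v : List (ℤ × Bool)) : ∀ (j : ℤ) (e : Bool),
    ins q (j + s) e (sh s v) = sh s (ins q j e v) := by
  induction v with
  | nil => intro j e; simp [ins, sh]
  | cons b v ih =>
    obtain ⟨i, d⟩ := b
    intro j e
    have e1 : sh s ((i, d) :: v) = (i + s, d) :: sh s v := rfl
    have a1 : j + s + q = j + q + s := by ring
    have a2 : j + s - q = j - q + s := by ring
    have a3 : i + s + q < j + s ↔ i + q < j := by omega
    rw [e1, ins, ins, a1, a2, ih, ih]
    simp only [add_left_inj, add_lt_add_iff_right, a3]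
    split_ifs <;> rfl

abbrev St (q : ℤ) := {v : List (ℤ × Bool) // Red q v} × ℤ

def shP (q : ℤ) : Equiv.Perm (St q) where
  toFun x := (⟨sh (-q) x.1.1, sh_Red q _ _ x.1.2⟩, x.2 + 1)
  invFun x := (⟨sh q x.1.1, sh_Red q _ _ x.1.2⟩, x.2 - 1)
  left_inv x := by
    ext1
    · exact Subtype.ext (sh_sh _ _ (by omega) _)
    · simp
  right_inv x := by
    ext1
    · exact Subtype.ext (sh_sh _ _ (by omega) _)
    · simp

def insP (q : ℤ) (hq : 0 < q) (j : ℤ) : Equiv.Perm (St q) where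
  toFun x := (⟨ins q j true x.1.1, ins_Red q hq _ _ _ x.1.2⟩, x.2)
  invFun x := (⟨ins q j false x.1.1, ins_Red q hq _ _ _ x.1.2⟩, x.2)
  left_inv x := by
    ext1
    · exact Subtype.ext (ins_inv q hq _ j true x.1.2)
    · rfl
  right_inv x := by
    ext1
    · exact Subtype.ext (ins_inv q hq _ j false x.1.2)
    · rfl

def genP (q : ℤ) (hq : 0 < q) (j : ℕ) : Equiv.Perm (St q) :=
  if j = 0 then shP q else insP q hq j

theorem genP_rel (q : ℕ) (hq : 0 < (q : ℤ)) (i j : ℕ) (h : i < j) :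
    genP q hq j * genP q hq i = genP q hq i * genP q hq (j + q) := by
  ext1 x
  rw [Equiv.Perm.mul_apply, Equiv.Perm.mul_apply]
  unfold genP
  rw [if_neg (by omega : ¬ j = 0), if_neg (by omega : ¬ j + q = 0)]
  split_ifs with hi
  · ext1
    · apply Subtype.ext
      change ins q j true (sh (-q) x.1.1) = sh (-q) (ins q ((j + q : ℕ) : ℤ) true x.1.1)
      rw [← ins_sh]; simp
    · rfl
  · ext1
    · apply Subtype.ext
      change ins q j true (ins q i true x.1.1) = ins q i true (ins q ((j + q : ℕ) : ℤ) true x.1.1)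
      rw [ins_rel q hq x.1.1 i j (by omega) x.1.2]; simp
    · rfl

def homP (p : ℕ) (hq : 0 < ((p - 1 : ℕ) : ℤ)) : FP p →* Equiv.Perm (St ((p - 1 : ℕ) : ℤ)) :=
  PresentedGroup.toGroup (f := genP _ hq) (by
    rintro r ⟨i, j, hij, rfl⟩
    have e : j + p - 1 = j + (p - 1) := by omega
    simp only [map_mul, map_inv, FreeGroup.lift_apply_of, e]
    rw [genP_rel _ hq i j hij]
    group)

theorem homP_xgen (p : ℕ) (hq) (i : ℕ) : homP p hq (xgen p i) = genP _ hq i := by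
  unfold homP xgen
  exact PresentedGroup.toGroup.of _

def letter (p : ℕ) (a : ℕ × Bool) : FP p := if a.2 = true then xgen p a.1 else (xgen p a.1)⁻¹

def enc (q : ℤ) : List (ℕ × Bool) → List (ℤ × Bool) × ℤ
  | [] => ([], 0)
  | (a, e) :: w =>
    if a = 0 then
      if e = true then (sh (-q) (enc q w).1, (enc q w).2 + 1)
      else (sh q (enc q w).1, (enc q w).2 - 1)
    else (((a : ℤ), e) :: (enc q w).1, (enc q w).2)

theorem NFin_tail {p : ℕ} {a : ℕ × Bool} {w : List (ℕ × Bool)} (h : NFin p (a :: w)) :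
    NFin p w :=
  ⟨fun b hb => h.1 b (List.mem_cons_of_mem _ hb),
    fun u hu => h.2 u (hu.trans (List.suffix_cons a w).isInfix)⟩

theorem NFin_red {p : ℕ} {i : ℕ} {e : Bool} {w : List (ℕ × Bool)} :
    ¬ NFin p ((i, e) :: (i, !e) :: w) := fun h =>
  h.2 [(i, e), (i, !e)] ⟨[], w, by simp⟩ (Or.inl ⟨i, e, h.1 (i, e) (by simp), rfl⟩)

/-- shape of a word, read off from the encoding -/
theorem enc_shape (p : ℕ) (hp : 2 ≤ p) (w : List (ℕ × Bool)) (h : NFin p w) :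
    match (enc ((p - 1 : ℕ) : ℤ) w).1 with
    | [] => (∃ k : ℕ, (enc ((p - 1 : ℕ) : ℤ) w).2 = k ∧ w = List.replicate k (0, true)) ∨
        ((enc ((p - 1 : ℕ) : ℤ) w).2 < 0 ∧ ∃ w', w = (0, false) :: w')
    | (j, d) :: _ =>
        (∃ k b : ℕ, 1 ≤ b ∧ b ≤ p - 1 ∧ j = (b : ℤ) - k * ((p - 1 : ℕ) : ℤ) ∧
          ∃ w', w = List.replicate k (0, true) ++ (b, d) :: w') ∨
        (((p - 1 : ℕ) : ℤ) < j ∧ ∃ w', w = (0, false) :: w') := by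
  induction w with
  | nil => left; exact ⟨0, rfl, rfl⟩
  | cons a w ih =>
    obtain ⟨a, e⟩ := a
    have ih := ih (NFin_tail h)
    have hq : (0 : ℤ) < ((p - 1 : ℕ) : ℤ) := by omega
    generalize hQ : ((p - 1 : ℕ) : ℤ) = q at *
    by_cases ha : a = 0
    · subst ha
      rcases hE : enc q w with ⟨L, t⟩
      rw [hE] at ih
      cases e
      · cases L with
        | nil =>
          have : enc q ((0, false) :: w) = ([], t - 1) := by simp [enc, hE, sh]
          rw [this]
          right
          refine ⟨?_, w, rfl⟩
          rcases ih with ⟨k, hk, hw⟩ | ⟨ht, _⟩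
          · cases k with
            | zero => simp only at hk ⊢; omega
            | succ k => subst hw; exact absurd h NFin_red
          · simp only at ht ⊢; omega
        | cons b L =>
          obtain ⟨j, d⟩ := b
          have : enc q ((0, false) :: w) = ((j + q, d) :: sh q L, t - 1) := by simp [enc, hE, sh]
          rw [this]
          right
          refine ⟨?_, w, rfl⟩
          rcases ih with ⟨k, b, hb1, hb2, hj, w', hw⟩ | ⟨ht, _⟩
          · cases k with
            | zero => simp at hj; omega
            | succ k => subst hw; exact absurd h NFin_red
          · omega
      · cases L with
        | nil =>
          have : enc q ((0, true) :: w) = ([], t + 1) := by simp [enc, hE, sh]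
          rw [this]
          left
          rcases ih with ⟨k, hk, hw⟩ | ⟨ht, w', hw⟩
          · exact ⟨k + 1, by simpa using hk, by rw [hw]; rfl⟩
          · subst hw; exact absurd h NFin_red
        | cons b L =>
          obtain ⟨j, d⟩ := b
          have : enc q ((0, true) :: w) = ((j + -q, d) :: sh (-q) L, t + 1) := by
            simp [enc, hE, sh]
          rw [this]
          left
          rcases ih with ⟨k, b, hb1, hb2, hj, w', hw⟩ | ⟨ht, w', hw⟩
          · exact ⟨k + 1, b, hb1, hb2, by rw [hj]; push_cast; ring, w', by rw [hw]; rfl⟩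
          · subst hw; exact absurd h NFin_red
    · have : enc q ((a, e) :: w) = (((a : ℤ), e) :: (enc q w).1, (enc q w).2) := by
        simp [enc, ha]
      rw [this]
      left
      exact ⟨0, a, by omega, h.1 (a, e) (by simp), by simp, w, by simp⟩

theorem enc_HC (p : ℕ) (hp : 2 ≤ p) (a : ℕ) (ha : a ≠ 0) (e : Bool) (w : List (ℕ × Bool))
    (h : NFin p ((a, e) :: w)) :
    HC ((p - 1 : ℕ) : ℤ) ((a : ℤ), e) (enc ((p - 1 : ℕ) : ℤ) w).1 := by
  have hs := enc_shape p hp w (NFin_tail h)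
  have hap : a ≤ p - 1 := h.1 (a, e) (by simp)
  have hq : (0 : ℤ) < ((p - 1 : ℕ) : ℤ) := by omega
  generalize enc ((p - 1 : ℕ) : ℤ) w = E at *
  rcases E with ⟨L, t⟩
  rcases L with _ | ⟨⟨j, d⟩, L⟩
  · trivial
  rcases hs with ⟨k, b, hb1, hb2, hj, w', hw⟩ | ⟨hj, _⟩
  · have hF := h.2 ((a, e) :: (List.replicate k (0, true) ++ [(b, d)]))
      ⟨[], w', by rw [hw]; simp⟩
    rcases k with _ | _ | k
    · simp only [Nat.cast_zero, zero_mul, sub_zero] at hj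
      subst hj
      refine ⟨?_, ?_, ?_⟩
      · rintro ⟨h1, h2⟩
        simp only [Nat.cast_inj] at h1 h2
        subst h1 h2
        exact hF (Or.inl ⟨b, e, hap, by simp⟩)
      · intro hd
        simp only at hd
        subst hd
        by_contra hlt
        exact hF (Or.inr (Or.inl ⟨a, b, 0, e, hb1, by simpa using hlt, hap, rfl⟩))
      · intro _; simp only; omega
    · simp only [zero_add, Nat.cast_one, one_mul] at hj
      refine ⟨by simp only; omega, ?_, ?_⟩
      · intro hd
        simp only at hd
        subst hd
        exfalso
        rcases lt_or_ge b a with hba | hba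
        · exact hF (Or.inr (Or.inl ⟨a, b, 1, e, hb1, hba, hap, rfl⟩))
        · exact hF (Or.inr (Or.inr (Or.inr (Or.inl ⟨a, b, 0, e, by omega, hba, hb2, rfl⟩))))
      · intro hd
        simp only at hd
        subst hd
        by_contra hlt
        simp only at hlt
        exact hF (Or.inr (Or.inr (Or.inl ⟨a, b, 0, e, hb1, by omega, hap, rfl⟩)))
    · exfalso
      cases d
      · rcases lt_or_ge b a with hba | hba
        · exact hF (Or.inr (Or.inr (Or.inl ⟨a, b, k + 1, e, hb1, hba, hap, rfl⟩)))
        · exact hF (Or.inr (Or.inr (Or.inr (Or.inr ⟨a, b, k, e, by omega, hba, hb2, rfl⟩))))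
      · rcases lt_or_ge b a with hba | hba
        · exact hF (Or.inr (Or.inl ⟨a, b, k + 2, e, hb1, hba, hap, rfl⟩))
        · exact hF (Or.inr (Or.inr (Or.inr (Or.inl ⟨a, b, k + 1, e, by omega, hba, hb2, rfl⟩))))
  · refine ⟨by simp only; omega, by simp only; omega, by simp only; omega⟩

theorem act_enc (p : ℕ) (hp : 2 ≤ p) (hq) (w : List (ℕ × Bool)) (h : NFin p w) :
    ((homP p hq (w.map (letter p)).prod (⟨[], trivial⟩, 0)).1.1,
      (homP p hq (w.map (letter p)).prod (⟨[], trivial⟩, 0)).2) = enc ((p - 1 : ℕ) : ℤ) w := by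
  induction w with
  | nil => simp [enc]
  | cons a w ih =>
    have ih := ih (NFin_tail h)
    obtain ⟨a, e⟩ := a
    simp only [List.map_cons, List.prod_cons, map_mul, Equiv.Perm.mul_apply]
    generalize homP p hq (w.map (letter p)).prod (⟨[], trivial⟩, 0) = x at *
    have hc := enc_HC p hp a
    rw [Prod.ext_iff] at ih
    simp only at ih
    by_cases ha : a = 0
    · subst ha
      cases e
      · simp only [letter, map_inv, homP_xgen, enc, genP, if_pos, ← ih.1, ← ih.2,
          Bool.false_eq_true, if_false]
        rfl
      · simp only [letter, homP_xgen, enc, genP, if_pos, ← ih.1, ← ih.2]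
        rfl
    · have hc := hc ha e w h
      rw [← ih.1] at hc
      have := ins_of_HC _ _ _ _ hc
      simp only [enc, if_neg ha, ← ih.1, ← ih.2]
      rw [← this]
      cases e
      · simp only [letter, map_inv, homP_xgen, genP, if_neg ha,
          Bool.false_eq_true, if_false]
        rfl
      · simp only [letter, homP_xgen, genP, if_neg ha, if_true]
        rfl

theorem enc_head (p : ℕ) (hp : 2 ≤ p) (w w' : List (ℕ × Bool)) (h : NFin p w) (h' : NFin p w')
    (he : enc ((p - 1 : ℕ) : ℤ) w = enc ((p - 1 : ℕ) : ℤ) w') : w.head? = w'.head? := by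
  have s := enc_shape p hp w h
  have s' := enc_shape p hp w' h'
  have hq : (0 : ℤ) < ((p - 1 : ℕ) : ℤ) := by omega
  rw [← he] at s'
  clear he
  generalize enc ((p - 1 : ℕ) : ℤ) w = E at *
  rcases E with ⟨L, t⟩
  rcases L with _ | ⟨⟨j, d⟩, L⟩
  · rcases s with ⟨k, hk, hw⟩ | ⟨ht, u, hw⟩ <;> rcases s' with ⟨k', hk', hw'⟩ | ⟨ht', u', hw'⟩
    · have : k = k' := by simp only at hk hk'; omega
      rw [hw, hw', this]
    · simp only at hk ht'; omega
    · simp only at hk' ht; omega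
    · rw [hw, hw']; rfl
  · have aux : ∀ k b : ℕ, b ≤ p - 1 → j = (b : ℤ) - k * ((p - 1 : ℕ) : ℤ) →
        ((p - 1 : ℕ) : ℤ) < j → False := by
      intro k b hb hj hlt
      have : (0 : ℤ) ≤ k * ((p - 1 : ℕ) : ℤ) := by positivity
      omega
    rcases s with ⟨k, b, hb1, hb2, hj, u, hw⟩ | ⟨ht, u, hw⟩ <;>
      rcases s' with ⟨k', b', hb1', hb2', hj', u', hw'⟩ | ⟨ht', u', hw'⟩
    · have hk : k = k' := by
        rcases lt_trichotomy k k' with hlt | heq | hlt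
        · have : ((k : ℤ) + 1) * ((p - 1 : ℕ) : ℤ) ≤ k' * ((p - 1 : ℕ) : ℤ) := by
            apply mul_le_mul_of_nonneg_right _ hq.le; omega
          rw [add_mul] at this; omega
        · exact heq
        · have : ((k' : ℤ) + 1) * ((p - 1 : ℕ) : ℤ) ≤ k * ((p - 1 : ℕ) : ℤ) := by
            apply mul_le_mul_of_nonneg_right _ hq.le; omega
          rw [add_mul] at this; omega
      subst hk
      have hb : b = b' := by omega
      subst hb
      rw [hw, hw']
      cases k <;> rfl
    · exact (aux k b hb2 hj ht').elim
    · exact (aux k' b' hb2' hj' ht).elim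
    · rw [hw, hw']; rfl

theorem word_inj (p : ℕ) (hp : 2 ≤ p) (w : List (ℕ × Bool)) : ∀ (w' : List (ℕ × Bool)),
    NFin p w → NFin p w' →
    (w.map (letter p)).prod = (w'.map (letter p)).prod → w = w' := by
  have hq : (0 : ℤ) < ((p - 1 : ℕ) : ℤ) := by omega
  induction w with
  | nil =>
    intro w' h h' he
    have := enc_head p hp _ _ h h' (by rw [← act_enc p hp hq _ h, ← act_enc p hp hq _ h', he])
    cases w' <;> simp_all
  | cons a w ih =>
    intro w' h h' he
    have := enc_head p hp _ _ h h' (by rw [← act_enc p hp hq _ h, ← act_enc p hp hq _ h', he])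
    cases w' with
    | nil => simp at this
    | cons b w' =>
      simp only [List.head?_cons, Option.some.injEq] at this
      subst this
      rw [ih w' (NFin_tail h) (NFin_tail h') (by simpa using he)]

theorem xgen_mem (p : ℕ) (hp : 2 ≤ p) (i : ℕ) :
    xgen p i ∈ Subgroup.closure {a | ∃ i < p, a = xgen p i} := by
  induction i using Nat.strong_induction_on with
  | _ i ih =>
    by_cases hi : i < p
    · exact Subgroup.subset_closure ⟨i, hi, rfl⟩
    · have h0 := ih 0 (by omega)
      have h1 := ih (i - (p - 1)) (by omega)
      have hr : xgen p (i - (p - 1)) * xgen p 0 * (xgen p i)⁻¹ * (xgen p 0)⁻¹ = 1 := by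
        have : (FreeGroup.of (i - (p - 1)) * FreeGroup.of 0 * (FreeGroup.of i)⁻¹ *
            (FreeGroup.of 0)⁻¹) ∈ ThompsonRels p :=
          ⟨0, i - (p - 1), by omega, by
            have : i - (p - 1) + p - 1 = i := by omega
            rw [this]⟩
        have := PresentedGroup.one_of_mem this
        simpa [xgen, PresentedGroup.of] using this
      have : xgen p i = (xgen p 0)⁻¹ * (xgen p (i - (p - 1)) * xgen p 0) := by
        rw [mul_inv_eq_one, mul_inv_eq_iff_eq_mul] at hr
        rw [hr]; group
      rw [this]
      exact mul_mem (inv_mem h0) (mul_mem h1 h0)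

theorem wlen_nonempty (p : ℕ) (hp : 2 ≤ p) (g : FP p) :
    {n | ∃ l : List (FP p), l.length = n ∧
    (∀ a ∈ l, ∃ i < p, a = xgen p i ∨ a = (xgen p i)⁻¹) ∧ l.prod = g}.Nonempty := by
  have hg : g ∈ Subgroup.closure {a | ∃ i < p, a = xgen p i} := by
    have htop : (⊤ : Subgroup (FP p)) ≤ Subgroup.closure {a | ∃ i < p, a = xgen p i} := by
      rw [← PresentedGroup.closure_range_of (ThompsonRels p), Subgroup.closure_le]
      rintro _ ⟨i, rfl⟩
      exact xgen_mem p hp i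
    exact htop trivial
  rw [← Subgroup.mem_toSubmonoid, Subgroup.closure_toSubmonoid] at hg
  obtain ⟨l, hl, rfl⟩ := Submonoid.exists_list_of_mem_closure hg
  refine ⟨l.length, l, rfl, fun a ha => ?_, rfl⟩
  rcases hl a ha with ⟨i, hi, h⟩ | ⟨i, hi, h⟩
  · exact ⟨i, hi, Or.inl h⟩
  · exact ⟨i, hi, Or.inr (by rw [← h, inv_inv])⟩

theorem ball_finite (p : ℕ) (hp : 2 ≤ p) (n : ℕ) : Finite {g : FP p // wlen p g ≤ n} := by
  have hS : Set.Finite {a : FP p | ∃ i < p, a = xgen p i ∨ a = (xgen p i)⁻¹} := by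
    apply ((Set.finite_lt_nat p).image (xgen p) |>.union
      ((Set.finite_lt_nat p).image (fun i => (xgen p i)⁻¹))).subset
    rintro a ⟨i, hi, h | h⟩
    · exact Or.inl ⟨i, hi, h.symm⟩
    · exact Or.inr ⟨i, hi, h.symm⟩
  have := hS.to_subtype
  have hL := List.finite_length_le {a : FP p | ∃ i < p, a = xgen p i ∨ a = (xgen p i)⁻¹} n
  apply Set.Finite.to_subtype
  apply (hL.image (fun l => (l.map Subtype.val).prod)).subset
  intro g hg
  obtain ⟨l, h1, h2, h3⟩ := Nat.sInf_mem (wlen_nonempty p hp g)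
  refine ⟨l.attach.map (fun a => ⟨a.1, h2 a.1 a.2⟩), ?_, ?_⟩
  · have : l.length ≤ n := by rw [h1]; exact hg
    simpa using this
  · simpa [List.map_map, Function.comp_def] using h3

/-- Each word of length at most `n` in `N_fin(p)` represents an element at
distance at most `n` from the identity, so the number of such words is at most
the cardinality of the ball `B(n)` in `F(p)`. -/
theorem stmt17 (p : ℕ) (hp : 2 ≤ p) (n : ℕ) :
    Nat.card {w : List (ℕ × Bool) // w.length ≤ n ∧ NFin p w} ≤
      Nat.card {g : FP p // wlen p g ≤ n} := by
  have := ball_finite p hp n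
  apply Nat.card_le_card_of_injective
    (fun w : {w : List (ℕ × Bool) // w.length ≤ n ∧ NFin p w} =>
      (⟨(w.1.map (letter p)).prod, ?_⟩ : {g : FP p // wlen p g ≤ n}))
  · intro w w' h
    exact Subtype.ext (word_inj p hp _ _ w.2.2 w'.2.2 (congrArg Subtype.val h))
  · refine le_trans (Nat.sInf_le ⟨w.1.map (letter p), rfl, ?_, rfl⟩) (by simpa using w.2.1)
    intro a ha
    obtain ⟨b, hb, rfl⟩ := List.mem_map.1 ha
    refine ⟨b.1, by have := w.2.2.1 b hb; omega, ?_⟩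
    unfold letter
    split_ifs
    · exact Or.inl rfl
    · exact Or.inr rfl
end

section
/- Let ξ be a real number with ξ > 1 satisfying (2ξ − 1)·(ξ − 1)^{p−1} = ξ^p. Then the growth rate of the generalized Thompson group F(p) with respect to the generators {x_0, …, x_{p-1}} is at least ξ: lim_{n→∞} (#B(n))^{1/n} ≥ ξ (equivalently, liminf_{n→∞} (#B(n))^{1/n} ≥ ξ). -/
namespace TF

/-- letters `X_i^{±1}`, `i ∈ ℤ` -/
abbrev LT := ℤ × Bool

def inv (a : LT) : LT := (a.1, !a.2)
def thr (d : ℤ) (a : LT) : ℤ := if a.2 then a.1 + d else a.1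
def sft (d : ℤ) (a : LT) : ℤ := if a.2 then -d else d
def sh (d : ℤ) (a b : LT) : LT := (b.1 + sft d a, b.2)
def Ok (d : ℤ) (a b : LT) : Prop := b.1 ≤ thr d a ∧ b ≠ inv a

def mul (d : ℤ) (a : LT) : List LT → List LT
  | [] => [a]
  | b :: w => if b = inv a then w else if b.1 ≤ thr d a then a :: b :: w
      else sh d a b :: mul d a w

lemma inv_inv (a : LT) : inv (inv a) = a := by simp [inv]
lemma thr_inv (d : ℤ) (a : LT) : thr d (inv a) = thr d a + sft d a := by
  obtain ⟨i, _ | _⟩ := a <;> simp [inv, thr, sft]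
lemma sft_inv (d : ℤ) (a : LT) : sft d (inv a) = - sft d a := by
  obtain ⟨i, _ | _⟩ := a <;> simp [inv, sft]
lemma le_thr {d : ℤ} (hd : 0 ≤ d) (a : LT) : a.1 ≤ thr d a := by
  obtain ⟨i, _ | _⟩ := a <;> simp [thr, hd]
lemma thr_sh (d : ℤ) (a b : LT) : thr d (sh d a b) = thr d b + sft d a := by
  obtain ⟨i, _ | _⟩ := b <;> simp [sh, thr]; ring
lemma sft_sh (d : ℤ) (a b : LT) : sft d (sh d a b) = sft d b := by
  obtain ⟨i, _ | _⟩ := b <;> simp [sh, sft]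
lemma inv_sh (d : ℤ) (a b : LT) : inv (sh d a b) = sh d a (inv b) := by
  simp [sh, inv]
lemma sh_inj (d : ℤ) (a b c : LT) : sh d a b = sh d a c ↔ b = c := by
  simp [sh, Prod.ext_iff]
lemma sh_fst (d : ℤ) (a b : LT) : (sh d a b).1 = b.1 + sft d a := rfl
lemma inv_fst (a : LT) : (inv a).1 = a.1 := rfl

lemma mul_far {d : ℤ} (hd : 0 ≤ d) {a b : LT} (h : thr d a < b.1) (w : List LT) :
    mul d a (b :: w) = sh d a b :: mul d a w := by
  have h1 : b ≠ inv a := by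
    rintro rfl; have := le_thr hd a; rw [inv_fst] at h; omega
  rw [mul, if_neg h1, if_neg (by omega)]

lemma mul_ok {d : ℤ} {a : LT} {w : List LT} (h : ∀ b ∈ w.head?, Ok d a b) :
    mul d a w = a :: w := by
  cases w with
  | nil => rfl
  | cons b w =>
    have := h b (by simp)
    rw [mul, if_neg this.2, if_pos this.1]

lemma mul_inv_cons {d : ℤ} {a : LT} {w : List LT} : mul d a (inv a :: w) = w := by
  rw [mul, if_pos rfl]

/-- trichotomy -/
lemma tri (d : ℤ) (a b : LT) : b = inv a ∨ Ok d a b ∨ thr d a < b.1 := by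
  by_cases h : b = inv a
  · exact Or.inl h
  · by_cases h2 : b.1 ≤ thr d a
    · exact Or.inr (Or.inl ⟨h2, h⟩)
    · exact Or.inr (Or.inr (by omega))

abbrev IsNF (d : ℤ) (w : List LT) : Prop := w.IsChain (Ok d)

lemma nf_cons {d : ℤ} {b : LT} {w : List LT} :
    IsNF d (b :: w) ↔ (∀ c ∈ w.head?, Ok d b c) ∧ IsNF d w := List.isChain_cons

lemma ok_far {d : ℤ} (hd : 0 ≤ d) {a b : LT} (h : thr d a < b.1) : Ok d (sh d a b) a := by
  have h1 := le_thr hd b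
  have h2 := thr_inv d a
  have h3 := le_thr hd (inv a)
  rw [inv_fst] at h3
  refine ⟨by rw [thr_sh]; omega, ?_⟩
  intro h4
  have := congrArg Prod.fst h4
  rw [inv_fst, sh_fst] at this
  omega

lemma head_far {d : ℤ} (hd : 0 ≤ d) {a b : LT} (h : thr d a < b.1) {w : List LT}
    (hw : IsNF d w) (hb : ∀ c ∈ w.head?, Ok d b c) :
    ∀ c ∈ (mul d a w).head?, Ok d (sh d a b) c := by
  cases w with
  | nil => simpa [mul] using ok_far hd h
  | cons c w =>
    rcases tri d a c with rfl | hc | hc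
    · rw [mul_inv_cons]
      intro e he
      have := (nf_cons.1 hw).1 e he
      have h1 := le_thr hd b
      have h2 := this.1
      rw [thr_inv] at h2
      refine ⟨by rw [thr_sh]; omega, ?_⟩
      intro h4
      have := congrArg Prod.fst h4
      rw [inv_fst, sh_fst] at this
      omega
    · rw [mul_ok (by simpa using hc)]
      simpa using ok_far hd h
    · rw [mul_far hd hc]
      have := hb c (by simp)
      simp only [List.head?_cons, Option.mem_def, Option.some.injEq, forall_eq']
      refine ⟨by rw [thr_sh, sh_fst]; have := this.1; omega, ?_⟩
      rw [inv_sh, Ne, sh_inj]; exact this.2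

lemma mul_nf {d : ℤ} (hd : 0 ≤ d) (a : LT) {w : List LT} (hw : IsNF d w) :
    IsNF d (mul d a w) := by
  induction w with
  | nil => simp [mul]
  | cons b w ih =>
    rcases tri d a b with rfl | hc | hc
    · rw [mul_inv_cons]; exact (nf_cons.1 hw).2
    · rw [mul_ok (by simpa using hc)]; exact nf_cons.2 ⟨by simpa using hc, hw⟩
    · rw [mul_far hd hc]
      exact nf_cons.2 ⟨head_far hd hc (nf_cons.1 hw).2 (nf_cons.1 hw).1, ih (nf_cons.1 hw).2⟩

lemma mul_cancel {d : ℤ} (hd : 0 ≤ d) (a : LT) {w : List LT} (hw : IsNF d w) :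
    mul d (inv a) (mul d a w) = w := by
  induction w with
  | nil => simp [mul, inv_inv]
  | cons b w ih =>
    rcases tri d a b with rfl | hc | hc
    · rw [mul_inv_cons]; exact mul_ok (nf_cons.1 hw).1
    · rw [mul_ok (a := a) (by simpa using hc)]
      have := @mul_inv_cons d (inv a) (b :: w)
      rwa [inv_inv] at this
    · rw [mul_far hd hc, mul_far hd (by rw [thr_inv, sh_fst]; omega), ih (nf_cons.1 hw).2]
      congr 1
      ext
      · simp only [sh_fst, sft_inv]; omega
      · rfl

lemma mul_rel {d : ℤ} (hd : 0 ≤ d) {a b : LT} (h : thr d a < b.1) {w : List LT}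
    (hw : IsNF d w) : mul d a (mul d b w) = mul d (sh d a b) (mul d a w) := by
  induction w with
  | nil =>
    have h1 := mul_far hd h []
    have h2 : mul d (sh d a b) [a] = sh d a b :: [a] := mul_ok (by simpa using ok_far hd h)
    simpa [mul, h2] using h1
  | cons c w ih =>
    rcases tri d b c with rfl | hc | hc
    · rw [mul_inv_cons, mul_far hd (by rwa [inv_fst]), ← inv_sh, mul_inv_cons]
    · rw [mul_ok (a := b) (by simpa using hc), mul_far hd h,
        mul_ok (head_far hd h hw (by simpa using hc))]
    · have h1 := le_thr hd b
      have h2 := thr_inv d b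
      have h3 := le_thr hd (inv b)
      rw [inv_fst] at h3
      rw [mul_far hd hc, mul_far hd (b := sh d b c) (by rw [sh_fst]; omega),
        ih (nf_cons.1 hw).2, mul_far hd (a := a) (b := c) (by omega),
        mul_far hd (by rw [thr_sh, sh_fst]; omega)]
      congr 1
      ext
      · simp only [sh_fst, sft_sh]; omega
      · rfl

/-- shift of lists -/
def shl (e : ℤ) (w : List LT) : List LT := w.map (fun b => (b.1 + e, b.2))

lemma shl_nf {d : ℤ} (e : ℤ) {w : List LT} (hw : IsNF d w) : IsNF d (shl e w) := by
  unfold IsNF shl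
  rw [List.isChain_map]
  refine List.IsChain.imp ?_ hw
  rintro ⟨i, _ | _⟩ ⟨j, _ | _⟩ h <;> simp [Ok, thr, inv] at h ⊢ <;> omega

lemma shl_shl (e f : ℤ) (w : List LT) : shl e (shl f w) = shl (f + e) w := by
  simp [shl, Function.comp_def, add_assoc]

lemma shl_zero (w : List LT) : shl 0 w = w := by
  simp [shl]

lemma shl_mul (d e : ℤ) (a : LT) (w : List LT) :
    shl e (mul d a w) = mul d (a.1 + e, a.2) (shl e w) := by
  induction w with
  | nil => simp [shl, mul]
  | cons b w ih =>
    have h1 : shl e (b :: w) = (b.1 + e, b.2) :: shl e w := rfl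
    have e1 : ((b.1 + e, b.2) = inv (a.1 + e, a.2)) ↔ b = inv a := by
      simp [inv, Prod.ext_iff]
    have e2 : (b.1 + e, b.2).1 ≤ thr d (a.1 + e, a.2) ↔ b.1 ≤ thr d a := by
      unfold thr; split_ifs <;> simp <;> omega
    rw [h1, mul, mul]
    simp only [e1, e2]
    split_ifs
    · rfl
    · rfl
    · rw [← ih]
      show _ :: _ = _
      congr 1
      ext
      · simp only [sh_fst, sft]; omega
      · rfl

abbrev NF (d : ℤ) := {w : List LT // IsNF d w}

def mulPerm {d : ℤ} (hd : 0 ≤ d) (a : LT) : Equiv.Perm (NF d) where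
  toFun w := ⟨mul d a w.1, mul_nf hd a w.2⟩
  invFun w := ⟨mul d (inv a) w.1, mul_nf hd _ w.2⟩
  left_inv w := Subtype.ext (mul_cancel hd a w.2)
  right_inv w := Subtype.ext (by
    have := mul_cancel hd (inv a) w.2
    rwa [inv_inv] at this)

def shPerm (d e : ℤ) : Equiv.Perm (NF d) where
  toFun w := ⟨shl e w.1, shl_nf e w.2⟩
  invFun w := ⟨shl (-e) w.1, shl_nf _ w.2⟩
  left_inv w := Subtype.ext (by simp [shl_shl, shl_zero])
  right_inv w := Subtype.ext (by simp [shl_shl, shl_zero])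

def gen {d : ℤ} (hd : 0 ≤ d) (i : ℕ) : Equiv.Perm (NF d) :=
  if i = 0 then shPerm d (-d) else mulPerm hd ((i : ℤ), true)

lemma gen_rel {d : ℕ} (hd : (0 : ℤ) ≤ d) {i j : ℕ} (h : i < j) :
    gen hd j * gen hd i = gen hd i * gen hd (j + d) := by
  ext1 w
  apply Subtype.ext
  have hj : j ≠ 0 := by omega
  have hj' : j + d ≠ 0 := by omega
  rcases Nat.eq_zero_or_pos i with rfl | hi
  · simp only [gen, if_neg hj, if_neg hj', if_true, Equiv.Perm.mul_apply]
    show mul d _ (shl _ w.1) = shl _ (mul d _ w.1)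
    rw [shl_mul]; congr 2; simp
  · have hi' : i ≠ 0 := by omega
    simp only [gen, if_neg hj, if_neg hj', if_neg hi', Equiv.Perm.mul_apply]
    show mul d _ (mul d _ w.1) = mul d _ (mul d _ w.1)
    rw [mul_rel hd (a := ((i : ℤ), true)) (b := (((j + d : ℕ) : ℤ), true))
      (by simp [thr]; omega) w.2]
    congr 2; simp [sft]

def act (d : ℕ) : FP (d + 1) →* Equiv.Perm (NF (d : ℤ)) :=
  PresentedGroup.toGroup (f := gen (Int.natCast_nonneg d)) (by
    rintro r ⟨i, j, h, rfl⟩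
    simp only [map_mul, map_inv, FreeGroup.lift_apply_of]
    have h1 := gen_rel (Int.natCast_nonneg d) h
    have h2 : j + (d + 1) - 1 = j + d := by omega
    rw [h2, h1]; group)

lemma act_x (d i : ℕ) : act d (xgen (d + 1) i) = gen (Int.natCast_nonneg d) i := by
  unfold act xgen
  exact PresentedGroup.toGroup.of _

/-- the normal form list of `g` -/
def nf (d : ℕ) (g : FP (d + 1)) : List LT := (act d g ⟨[], by simp⟩).1

lemma nf_isNF (d : ℕ) (g : FP (d + 1)) : IsNF (d : ℤ) (nf d g) := (act d g ⟨[], by simp⟩).2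

inductive St
  | T
  | P (i : ℕ)
  | M (i : ℕ)
  | R (i : ℕ)
  deriving DecidableEq

namespace St

def val (d : ℕ) : St → FP (d + 1)
  | T => xgen _ 0
  | P i => xgen _ i
  | M i => (xgen _ i)⁻¹
  | R _ => (xgen _ 0)⁻¹

def Valid (d : ℕ) : St → Prop
  | T => True
  | P i => 1 ≤ i ∧ i ≤ d
  | M i => 1 ≤ i ∧ i ≤ d
  | R i => 1 ≤ i ∧ i ≤ d

def Hd (d : ℕ) : St → LT → Prop
  | T, b => b.1 ≤ d
  | P i, b => Ok d ((i : ℤ), true) b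
  | M i, b => Ok d ((i : ℤ), false) b
  | R i, b => 1 ≤ b.1 ∧ b.1 ≤ i

def Cl (d : ℕ) : St → LT → Prop
  | T, b => b.1 ≤ 0
  | P i, b => b = ((i : ℤ), true)
  | M i, b => b = ((i : ℤ), false)
  | R i, b => (d : ℤ) + 1 ≤ b.1 ∧ b.1 ≤ i + d

open Finset in
def succ (d : ℕ) : St → Finset St
  | T => {T} ∪ (Icc 1 d).image P ∪ (Icc 1 d).image M
  | P i => {T, R i} ∪ (Icc 1 d).image P ∪ ((Icc 1 d).erase i).image M
  | M i => {T} ∪ (Ico 1 i).image P ∪ (Icc 1 i).image M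
  | R i => (Icc 1 i).image P ∪ (Icc 1 i).image M

def fin : St → St
  | M _ => M 1
  | _ => P 1

open Classical in
noncomputable def E (d : ℕ) : ℕ → St → Finset (FP (d + 1))
  | 0, s => {val d (fin s)}
  | n + 1, s => (succ d s).biUnion (fun a => (E d n a).image (fun g => val d a * g))

lemma succ_valid {d : ℕ} {s a : St} (hs : Valid d s) (ha : a ∈ succ d s) : Valid d a := by
  cases s <;> cases a <;> simp [succ, Valid] at hs ha ⊢ <;> omega

lemma cl_hd {d : ℕ} {s a : St} (hs : Valid d s) (ha : a ∈ succ d s) {b : LT}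
    (h : Cl d a b) : Hd d s b := by
  obtain ⟨j, _ | _⟩ := b <;> cases s <;> cases a <;>
    simp [succ, Valid, Cl, Hd, Ok, thr, inv] at hs ha h ⊢ <;> omega

set_option maxHeartbeats 4000000 in
lemma cl_disj {d : ℕ} {s a a' : St} (hs : Valid d s) (ha : a ∈ succ d s) (ha' : a' ∈ succ d s)
    {b : LT} (h : Cl d a b) (h' : Cl d a' b) : a = a' := by
  obtain ⟨j, e⟩ := b
  cases s <;> cases a <;> cases a' <;>
    simp [succ, Valid, Cl] at hs ha ha' h h' ⊢ <;>
    first | omega | (cases e <;> simp_all)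

lemma step {d : ℕ} {a : St} (ha : Valid d a) {g : FP (d + 1)}
    (h : ∃ b ∈ (nf d g).head?, Hd d a b) : ∃ b ∈ (nf d (val d a * g)).head?, Cl d a b := by
  obtain ⟨b, hb, h⟩ := h
  have hall : ∀ c ∈ (nf d g).head?, Hd d a c := by
    intro c hc
    rw [Option.mem_unique hc hb]; exact h
  have e0 : nf d (val d a * g) = (act d (val d a) ⟨nf d g, nf_isNF d g⟩).1 := by
    simp [nf]
  rw [e0]
  cases a with
  | T =>
    simp only [val, act_x, gen, if_true]
    refine ⟨(b.1 + -d, b.2), ?_, ?_⟩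
    · show _ ∈ (shl (-d) (nf d g)).head?
      simp only [Option.mem_def] at hb
      simp [shl, hb]
    · simp [Cl, Hd] at h ⊢; omega
  | P i =>
    have hi : i ≠ 0 := by simp [Valid] at ha; omega
    simp only [val, act_x, gen, if_neg hi]
    refine ⟨((i : ℤ), true), ?_, rfl⟩
    show _ ∈ (mul d _ (nf d g)).head?
    rw [mul_ok hall]; simp
  | M i =>
    have hi : i ≠ 0 := by simp [Valid] at ha; omega
    simp only [val, map_inv, act_x, gen, if_neg hi]
    refine ⟨((i : ℤ), false), ?_, rfl⟩
    show _ ∈ (mul d ((i : ℤ), false) (nf d g)).head?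
    rw [mul_ok hall]; simp
  | R i =>
    simp only [val, map_inv, act_x, gen, if_true]
    refine ⟨(b.1 + d, b.2), ?_, ?_⟩
    · show _ ∈ (shl (- -d) (nf d g)).head?
      simp only [Option.mem_def] at hb
      simp [shl, hb]
    · simp [Cl, Hd] at h ⊢; omega

lemma head_fin {d : ℕ} (hd : 1 ≤ d) {s : St} (hs : Valid d s) :
    ∃ b ∈ (nf d (val d (fin s))).head?, Hd d s b := by
  have e0 : ∀ a, nf d (val d a) = (act d (val d a) ⟨[], by simp⟩).1 := fun _ => rfl
  rw [e0]
  cases s with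
  | M i =>
    simp only [fin, val, map_inv, act_x, gen, if_neg one_ne_zero]
    refine ⟨((1 : ℕ), false), ?_, ?_⟩
    · show _ ∈ (mul d ((1 : ℕ), false) []).head?
      simp [mul]
    · simp [Hd, Ok, thr, inv, Valid] at hs ⊢; omega
  | _ =>
    simp only [fin, val, act_x, gen, if_neg one_ne_zero]
    refine ⟨((1 : ℕ), true), ?_, ?_⟩
    · show _ ∈ (mul d ((1 : ℕ), true) []).head?
      simp [mul]
    · simp [Hd, Ok, thr, inv, Valid] at hs ⊢ <;> omega

lemma head_E {d : ℕ} (hd : 1 ≤ d) (n : ℕ) {s : St} (hs : Valid d s) {g : FP (d + 1)}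
    (hg : g ∈ E d n s) : ∃ b ∈ (nf d g).head?, Hd d s b := by
  induction n generalizing s g with
  | zero =>
    simp only [E, Finset.mem_singleton] at hg
    subst hg; exact head_fin hd hs
  | succ n ih =>
    simp only [E, Finset.mem_biUnion, Finset.mem_image] at hg
    obtain ⟨a, ha, g, hg, rfl⟩ := hg
    have hv := succ_valid hs ha
    obtain ⟨b, hb, hc⟩ := step hv (ih hv hg)
    exact ⟨b, hb, cl_hd hs ha hc⟩

open Classical in
lemma card_E {d : ℕ} (hd : 1 ≤ d) (n : ℕ) {s : St} (hs : Valid d s) :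
    (E d (n + 1) s).card = ∑ a ∈ succ d s, (E d n a).card := by
  rw [E, Finset.card_biUnion (s := succ d s)
    (t := fun a => (E d n a).image (fun g => val d a * g))]
  · refine Finset.sum_congr rfl fun a _ => ?_
    exact Finset.card_image_of_injective _ (mul_right_injective _)
  · intro a ha a' ha' hne
    show Disjoint (Finset.image _ _) (Finset.image _ _)
    rw [Finset.disjoint_left]
    intro g hg hg'
    simp only [Finset.mem_image] at hg hg'
    obtain ⟨g1, h1, rfl⟩ := hg
    obtain ⟨g2, h2, h3⟩ := hg'
    have hv := succ_valid hs ha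
    have hv' := succ_valid hs ha'
    obtain ⟨b, hb, hc⟩ := step hv (head_E hd n hv h1)
    obtain ⟨b', hb', hc'⟩ := step hv' (head_E hd n hv' h2)
    rw [h3] at hb'
    rw [Option.mem_unique hb' hb] at hc'
    exact hne (cl_disj hs ha ha' hc hc')

noncomputable def wt (q : ℝ) : St → ℝ
  | T => 1
  | P _ => 1
  | M i => q ^ i - 1
  | R i => q ^ i - 1

lemma sum_wt {d : ℕ} {q ξ : ℝ} (hq : ξ * (q - 1) = q) (hd : ξ * q ^ d = 2 * ξ - 1)
    {s : St} (hs : Valid d s) : ∑ a ∈ succ d s, wt q a = ξ * wt q s := by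
  have key : ∀ i : ℕ, ∑ j ∈ Finset.Icc 1 i, (q ^ j - 1) = ξ * (q ^ i - 1) - i := by
    intro i
    induction i with
    | zero => simp
    | succ i ih =>
      rw [Finset.sum_Icc_succ_top (by omega), ih]
      push_cast
      rw [pow_succ]
      linear_combination (-q ^ i) * hq
  have iP : Function.Injective P := fun a b h => by cases h; rfl
  have iM : Function.Injective M := fun a b h => by cases h; rfl
  have sP : ∀ A : Finset ℕ, ∑ a ∈ A.image P, wt q a = A.card := by
    intro A
    rw [Finset.sum_image iP.injOn]; simp [wt]
  have sM : ∀ A : Finset ℕ, ∑ a ∈ A.image M, wt q a = ∑ j ∈ A, (q ^ j - 1) := by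
    intro A
    rw [Finset.sum_image iM.injOn]; simp [wt]
  cases s with
  | T =>
    rw [succ, Finset.sum_union, Finset.sum_union, sP, sM, key]
    · simp [wt]; linarith
    · simp
    · rw [Finset.disjoint_left]; intro a; cases a <;> simp
  | P i =>
    rw [succ, Finset.sum_union, Finset.sum_union, sP, sM, Finset.sum_pair (by simp)]
    · have := Finset.add_sum_erase (Finset.Icc 1 d) (fun j => q ^ j - 1)
        (a := i) (by simpa [Valid] using hs)
      rw [key] at this
      simp [wt] at this ⊢; linarith
    · rw [Finset.disjoint_left]; intro a; cases a <;> simp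
    · rw [Finset.disjoint_left]; intro a; cases a <;> simp
  | M i =>
    rw [succ, Finset.sum_union, Finset.sum_union, sP, sM, key]
    · have h1 : 1 ≤ i := hs.1
      simp [wt, Nat.cast_sub h1]
    · simp
    · rw [Finset.disjoint_left]; intro a; cases a <;> simp
  | R i =>
    rw [succ, Finset.sum_union, sP, sM, key]
    · simp [wt]
    · rw [Finset.disjoint_left]; intro a; cases a <;> simp

lemma card_lower {d : ℕ} (hd1 : 1 ≤ d) {q ξ : ℝ} (hq1 : 1 ≤ q) (hq : ξ * (q - 1) = q)
    (hd : ξ * q ^ d = 2 * ξ - 1) (n : ℕ) {s : St} (hs : Valid d s) :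
    wt q s * ξ ^ n ≤ q ^ d * (E d n s).card := by
  induction n generalizing s with
  | zero =>
    have h1 : 1 ≤ q ^ d := one_le_pow₀ hq1
    have h2 : ∀ i ≤ d, q ^ i - 1 ≤ q ^ d := fun i hi => by
      have := pow_le_pow_right₀ hq1 hi
      linarith
    cases s <;> simp [E, wt, Valid] at hs ⊢
    · exact h1
    · exact h1
    · simpa using h2 _ hs.2
    · simpa using h2 _ hs.2
  | succ n ih =>
    rw [card_E hd1 n hs, Nat.cast_sum, Finset.mul_sum, pow_succ']
    calc wt q s * (ξ * ξ ^ n) = (∑ a ∈ succ d s, wt q a) * ξ ^ n := by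
          rw [sum_wt hq hd hs]; ring
      _ = ∑ a ∈ succ d s, wt q a * ξ ^ n := Finset.sum_mul _ _ _
      _ ≤ _ := Finset.sum_le_sum fun a ha => ih (succ_valid hs ha)

end St

/-- generators -/
def Gen (p : ℕ) (a : FP p) : Prop := ∃ i < p, a = xgen p i ∨ a = (xgen p i)⁻¹

def Rep (p n : ℕ) (g : FP p) : Prop :=
  ∃ l : List (FP p), l.length = n ∧ (∀ a ∈ l, Gen p a) ∧ l.prod = g

lemma wlen_le {p n : ℕ} {g : FP p} (h : Rep p n g) : wlen p g ≤ n := Nat.sInf_le h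

lemma val_gen {d : ℕ} {a : St} (ha : a.Valid d) : Gen (d + 1) (a.val d) := by
  cases a with
  | T => exact ⟨0, by omega, Or.inl rfl⟩
  | P i => exact ⟨i, by have := ha.2; omega, Or.inl rfl⟩
  | M i => exact ⟨i, by have := ha.2; omega, Or.inr rfl⟩
  | R i => exact ⟨0, by omega, Or.inr rfl⟩

lemma rep_E {d : ℕ} (hd : 1 ≤ d) (n : ℕ) {s : St} (hs : s.Valid d) {g : FP (d + 1)}
    (hg : g ∈ St.E d n s) : Rep (d + 1) (n + 1) g := by
  induction n generalizing s g with
  | zero =>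
    simp only [St.E, Finset.mem_singleton] at hg
    subst hg
    refine ⟨[_], rfl, ?_, List.prod_singleton⟩
    simp only [List.mem_singleton, forall_eq]
    apply val_gen
    cases s <;> simp [St.fin, St.Valid, hd]
  | succ n ih =>
    simp only [St.E, Finset.mem_biUnion, Finset.mem_image] at hg
    obtain ⟨a, ha, g, hg, rfl⟩ := hg
    have hv := St.succ_valid hs ha
    obtain ⟨l, hl, hl2, rfl⟩ := ih hv hg
    refine ⟨a.val d :: l, by simp [hl], ?_, by simp⟩
    simp only [List.mem_cons, forall_eq_or_imp]
    exact ⟨val_gen hv, hl2⟩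

lemma x_conj (d j : ℕ) (hj : 1 ≤ j) :
    xgen (d + 1) (j + d) = (xgen (d + 1) 0)⁻¹ * xgen (d + 1) j * xgen (d + 1) 0 := by
  have h : (PresentedGroup.mk (ThompsonRels (d + 1))) (FreeGroup.of j * FreeGroup.of 0 *
      (FreeGroup.of (j + (d + 1) - 1))⁻¹ * (FreeGroup.of 0)⁻¹) = 1 :=
    PresentedGroup.one_of_mem ⟨0, j, hj, rfl⟩
  have h2 : j + (d + 1) - 1 = j + d := by omega
  rw [h2] at h
  simp only [map_mul, map_inv] at h
  have h' : xgen (d + 1) j * xgen (d + 1) 0 * (xgen (d + 1) (j + d))⁻¹ * (xgen (d + 1) 0)⁻¹ = 1 := h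
  rw [mul_inv_eq_one, mul_inv_eq_iff_eq_mul] at h'
  rw [mul_assoc, h']; group

lemma Rep.mul {p n m : ℕ} {g h : FP p} (hg : Rep p n g) (hh : Rep p m h) :
    Rep p (n + m) (g * h) := by
  obtain ⟨l, h1, h2, rfl⟩ := hg
  obtain ⟨l', h1', h2', rfl⟩ := hh
  refine ⟨l ++ l', by simp [h1, h1'], ?_, by simp⟩
  intro a ha
  rcases List.mem_append.1 ha with ha | ha
  · exact h2 a ha
  · exact h2' a ha

lemma Gen.inv {p : ℕ} {a : FP p} (h : Gen p a) : Gen p a⁻¹ := by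
  obtain ⟨i, hi, rfl | rfl⟩ := h
  · exact ⟨i, hi, Or.inr rfl⟩
  · exact ⟨i, hi, Or.inl (_root_.inv_inv _)⟩

lemma Rep.inv {p n : ℕ} {g : FP p} (hg : Rep p n g) : Rep p n g⁻¹ := by
  obtain ⟨l, h1, h2, rfl⟩ := hg
  refine ⟨(l.map (·⁻¹)).reverse, by simp [h1], ?_, by rw [List.prod_inv_reverse]⟩
  intro a ha
  simp only [List.mem_reverse, List.mem_map] at ha
  obtain ⟨b, hb, rfl⟩ := ha
  exact (h2 b hb).inv

lemma Gen.rep {p : ℕ} {g : FP p} (hg : Gen p g) : Rep p 1 g :=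
  ⟨[g], rfl, by simpa using hg, by simp⟩

lemma rep_x (d : ℕ) (hd : 1 ≤ d) (i : ℕ) : ∃ n, Rep (d + 1) n (xgen (d + 1) i) := by
  induction i using Nat.strong_induction_on with
  | _ i ih =>
    by_cases h : i < d + 1
    · exact ⟨1, Gen.rep ⟨i, h, Or.inl rfl⟩⟩
    · obtain ⟨n, hn⟩ := ih (i - d) (by omega)
      have h0 : Rep (d + 1) 1 (xgen (d + 1) 0) := Gen.rep ⟨0, by omega, Or.inl rfl⟩
      have := x_conj d (i - d) (by omega)
      rw [show i - d + d = i by omega] at this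
      rw [this]
      exact ⟨_, (h0.inv.mul hn).mul h0⟩

lemma rep_all (d : ℕ) (hd : 1 ≤ d) (g : FP (d + 1)) : ∃ n, Rep (d + 1) n g := by
  obtain ⟨w, rfl⟩ := PresentedGroup.mk_surjective _ g
  induction w using FreeGroup.induction_on with
  | C1 => exact ⟨0, [], rfl, by simp, by simp⟩
  | of i => exact rep_x d hd i
  | inv_of i h =>
    obtain ⟨n, h⟩ := h
    exact ⟨n, by rw [map_inv]; exact h.inv⟩
  | mul x y hx hy =>
    obtain ⟨n, h⟩ := hx
    obtain ⟨m, h'⟩ := hy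
    exact ⟨_, by rw [map_mul]; exact h.mul h'⟩

lemma rep_wlen (d : ℕ) (hd : 1 ≤ d) (g : FP (d + 1)) : Rep (d + 1) (wlen (d + 1) g) g :=
  Nat.sInf_mem (s := {n | Rep (d + 1) n g}) (rep_all d hd g)

/-- encode ball elements by `Fin n → Option (Fin p × Bool)` -/
def dec (p : ℕ) : Option (Fin p × Bool) → FP p
  | none => 1
  | some (i, true) => xgen p i
  | some (i, false) => (xgen p i)⁻¹

lemma prod_cons {p n : ℕ} (o : Option (Fin p × Bool)) (f : Fin n → Option (Fin p × Bool)) :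
    (List.ofFn (fun k => dec p ((Fin.cons o f : Fin (n + 1) → _) k))).prod =
      dec p o * (List.ofFn (fun k => dec p (f k))).prod := by
  rw [List.ofFn_succ, List.prod_cons]; simp only [Fin.cons_zero, Fin.cons_succ]

lemma ball_surj (p : ℕ) (n m : ℕ) (hm : m ≤ n) (g : FP p) (h : Rep p m g) :
    ∃ f : Fin n → Option (Fin p × Bool), (List.ofFn (fun k => dec p (f k))).prod = g := by
  induction n generalizing m g with
  | zero =>
    obtain ⟨l, h1, h2, rfl⟩ := h
    have : l = [] := List.eq_nil_of_length_eq_zero (by omega)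
    subst this
    exact ⟨fun _ => none, by simp⟩
  | succ n ih =>
    obtain ⟨l, h1, h2, rfl⟩ := h
    cases l with
    | nil =>
      obtain ⟨f, hf⟩ := ih 0 (by omega) 1 ⟨[], rfl, by simp, by simp⟩
      refine ⟨Fin.cons none f, ?_⟩
      rw [prod_cons, hf]; simp [dec]
    | cons a l =>
      obtain ⟨f, hf⟩ := ih l.length (by simp at h1; omega) l.prod
        ⟨l, rfl, fun b hb => h2 b (by simp [hb]), rfl⟩
      obtain ⟨i, hi, rfl | rfl⟩ := h2 a (by simp)
      · refine ⟨Fin.cons (some (⟨i, hi⟩, true)) f, ?_⟩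
        rw [prod_cons, hf]; simp [dec]
      · refine ⟨Fin.cons (some (⟨i, hi⟩, false)) f, ?_⟩
        rw [prod_cons, hf]; simp [dec]

lemma ball_sub (d : ℕ) (hd : 1 ≤ d) (n : ℕ) : {g : FP (d + 1) | wlen (d + 1) g ≤ n} ⊆
    Set.range (fun f : Fin n → Option (Fin (d + 1) × Bool) =>
      (List.ofFn (fun k => dec (d + 1) (f k))).prod) := by
  intro g hg
  exact ball_surj _ n _ hg g (rep_wlen d hd g)

lemma ball_fin (d : ℕ) (hd : 1 ≤ d) (n : ℕ) : {g : FP (d + 1) | wlen (d + 1) g ≤ n}.Finite :=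
  (Set.finite_range _).subset (ball_sub d hd n)

lemma ball_card_le (d : ℕ) (hd : 1 ≤ d) (n : ℕ) :
    Nat.card {g : FP (d + 1) // wlen (d + 1) g ≤ n} ≤ ((d + 1) * 2 + 1) ^ n := by
  have h1 := Nat.card_mono (Set.finite_range _) (ball_sub d hd n)
  have h2 := Finite.card_range_le (fun f : Fin n → Option (Fin (d + 1) × Bool) =>
      (List.ofFn (fun k => dec (d + 1) (f k))).prod)
  refine (h1.trans h2).trans ?_
  simp

lemma ball_card_ge (d : ℕ) (hd : 1 ≤ d) (n : ℕ) :
    (St.E d n St.T).card ≤ Nat.card {g : FP (d + 1) // wlen (d + 1) g ≤ n + 1} := by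
  have h1 := Nat.card_mono (ball_fin d hd (n + 1)) (s := (St.E d n St.T : Set (FP (d + 1))))
    (fun g hg => wlen_le (rep_E hd n (s := St.T) trivial hg))
  rw [Nat.card_coe_set_eq, Set.ncard_coe_finset] at h1
  exact h1

end TF

open TF in
theorem stmt18 (p : ℕ) (hp : 2 ≤ p) (ξ : ℝ) (hξ : 1 < ξ)
    (heq : (2 * ξ - 1) * (ξ - 1) ^ (p - 1) = ξ ^ p) :
    ξ ≤ Filter.liminf
        (fun n : ℕ => (Nat.card {g : FP p // wlen p g ≤ n} : ℝ) ^ ((n : ℝ)⁻¹))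
        Filter.atTop := by
  obtain ⟨d, rfl⟩ : ∃ d, p = d + 1 := ⟨p - 1, by omega⟩
  have hd : 1 ≤ d := by omega
  have hx : 0 < ξ - 1 := by linarith
  have hx0 : 0 < ξ := by linarith
  obtain ⟨q, hqd⟩ : ∃ q, q = ξ / (ξ - 1) := ⟨_, rfl⟩
  have hq1 : 1 ≤ q := by rw [hqd, le_div_iff₀ hx]; linarith
  have hq : ξ * (q - 1) = q := by rw [hqd]; field_simp; ring
  have hqq : ξ * q ^ d = 2 * ξ - 1 := by
    rw [Nat.add_sub_cancel] at heq
    rw [hqd, div_pow, ← mul_div_assoc, div_eq_iff (by positivity), heq, pow_succ']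
  have hC : 0 < q ^ d * ξ := by positivity
  have lower : ∀ n : ℕ, 1 ≤ n → ξ ^ n / (q ^ d * ξ) ≤
      (Nat.card {g : FP (d + 1) // wlen (d + 1) g ≤ n} : ℝ) := by
    intro n hn
    obtain ⟨m, rfl⟩ : ∃ m, n = m + 1 := ⟨n - 1, by omega⟩
    have h1 := St.card_lower hd hq1 hq hqq m (s := St.T) trivial
    have h2 : ((St.E d m St.T).card : ℝ) ≤ _ := Nat.cast_le.2 (ball_card_ge d hd m)
    rw [div_le_iff₀ hC, pow_succ]
    simp only [St.wt, one_mul] at h1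
    have h3 : ξ ^ m ≤ q ^ d * (Nat.card {g : FP (d + 1) // wlen (d + 1) g ≤ m + 1} : ℝ) :=
      h1.trans (by gcongr)
    nlinarith
  have lim : Filter.Tendsto (fun n : ℕ => ξ * ((q ^ d * ξ)⁻¹) ^ ((n : ℝ)⁻¹)) Filter.atTop
      (nhds ξ) := by
    have h1 : Filter.Tendsto (fun n : ℕ => ((n : ℝ)⁻¹)) Filter.atTop (nhds 0) :=
      tendsto_inv_atTop_nhds_zero_nat
    have h2 := (Filter.Tendsto.rpow (tendsto_const_nhds (x := (q ^ d * ξ)⁻¹)) h1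
      (Or.inl (by positivity))).const_mul ξ
    simpa using h2
  rw [← lim.liminf_eq]
  refine Filter.liminf_le_liminf ?_ lim.isBoundedUnder_ge ?_
  · filter_upwards [Filter.eventually_ge_atTop 1] with n hn
    have hn0 : (n : ℝ) ≠ 0 := by positivity
    have h1 : ξ * ((q ^ d * ξ)⁻¹) ^ ((n : ℝ)⁻¹) = (ξ ^ n / (q ^ d * ξ)) ^ ((n : ℝ)⁻¹) := by
      rw [div_eq_mul_inv, Real.mul_rpow (by positivity) (by positivity),
        Real.pow_rpow_inv_natCast hx0.le (by omega)]
    rw [h1]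
    exact Real.rpow_le_rpow (by positivity) (lower n hn) (by positivity)
  · refine Filter.IsBoundedUnder.isCoboundedUnder_ge ?_
    refine Filter.isBoundedUnder_of_eventually_le (a := (((d + 1) * 2 + 1 : ℕ) : ℝ)) ?_
    filter_upwards [Filter.eventually_ge_atTop 1] with n hn
    have h1 : (Nat.card {g : FP (d + 1) // wlen (d + 1) g ≤ n} : ℝ) ≤
        (((d + 1) * 2 + 1 : ℕ) : ℝ) ^ n := by exact_mod_cast ball_card_le d hd n
    refine (Real.rpow_le_rpow (by positivity) h1 (by positivity)).trans ?_
    rw [Real.pow_rpow_inv_natCast (by positivity) (by omega)]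
end
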